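/- Let Γ' ≤ Λ(Γ_k) be a nontrivial subgroup of translations of Γ_k. For k = 3, 4, 6 the dimension of the space of restrictions to Γ' of discrete faithful representations of Γ_k is 2; for k = 2 it is 2r, where r is the rank of the free abelian group Γ'. In particular this dimension is always even. -/

import Mathlib

open Matrix

abbrev V2 := Fin 2 → ℝ
abbrev Mat2 := Matrix (Fin 2) (Fin 2) ℝ

/-- Rotation matrix through angle `θ`. -/
noncomputable def rotM (θ : ℝ) : Mat2 := !![Real.cos θ, -Real.sin θ; Real.sin θ, Real.cos θ]

/-- The Euclidean inner product on `ℝ²`. -/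
def dot2 (a b : V2) : ℝ := a 0 * b 0 + a 1 * b 1

/-- Rotation of a plane vector by `π/2` (the "perp" operator). -/
def perp (a : V2) : V2 := ![-(a 1), a 0]

/-- A set `X` in a topological space "has dimension at most `d`" witnessed by charts:
it is a finite union of continuous injective images of open subsets of `ℝ^d`. -/
def HasParamDim {α : Type*} [TopologicalSpace α] (X : Set α) (d : ℕ) : Prop :=
  ∃ (n : ℕ) (U : Fin n → Set (Fin d → ℝ)) (par : Fin n → ((Fin d → ℝ) → α)),
    (∀ i, IsOpen (U i)) ∧ (∀ i, ContinuousOn (par i) (U i)) ∧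
    (∀ i, Set.InjOn (par i) (U i)) ∧ X = ⋃ i, par i '' U i

/-- The restriction to a subgroup `L ≤ ℤ² = Λ(Γ_k)` of the representation of `Γ_k`
(`k = 3,4,6`) with parameters `(v₁, ε)`: the lattice point `(m₁, m₂)` (coordinates with
respect to the generators `t₁` and `r_k t₁ r_k⁻¹`) is sent to `m₁ v₁ + m₂ R_k^ε v₁`. -/
noncomputable def resHigher (θ : ℝ) (v₁ : V2) (L : AddSubgroup (Fin 2 → ℤ)) :
    ↥L → V2 :=
  fun m => (((m : Fin 2 → ℤ) 0 : ℝ)) • v₁ + (((m : Fin 2 → ℤ) 1 : ℝ)) • (rotM θ).mulVec v₁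

/-- The restriction to `L ≤ ℤ²` of the representation of `Γ₂` with parameters
`(v₁, v₂)`: `(m₁, m₂) ↦ m₁ v₁ + m₂ v₂`. -/
noncomputable def resTwo (v₁ v₂ : V2) (L : AddSubgroup (Fin 2 → ℤ)) : ↥L → V2 :=
  fun m => (((m : Fin 2 → ℤ) 0 : ℝ)) • v₁ + (((m : Fin 2 → ℤ) 1 : ℝ)) • v₂

/-- The restricted representation space `Rep_{Γ_k}(Γ')` for `k = 3,4,6`: restrictions to
`Γ' = L` of the discrete faithful representations of `Γ_k`, which are parametrized by
`(v₁, w, ε)` with `v₁ ≠ 0`, `ε = ±1` (the restriction does not depend on `w`). -/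
noncomputable def XHigher (k : ℕ) (L : AddSubgroup (Fin 2 → ℤ)) : Set (↥L → V2) :=
  {f | ∃ (v₁ : V2) (ε : ℤ), v₁ ≠ 0 ∧ (ε = 1 ∨ ε = -1) ∧
    f = resHigher (ε * (2 * Real.pi / k)) v₁ L}

/-- The restricted representation space `Rep_{Γ₂}(Γ')`: restrictions to `Γ' = L` of the
discrete faithful representations of `Γ₂`, parametrized by linearly independent
`(v₁, v₂)` (and `w`, on which the restriction does not depend). -/
noncomputable def XTwo (L : AddSubgroup (Fin 2 → ℤ)) : Set (↥L → V2) :=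
  {f | ∃ v₁ v₂ : V2, LinearIndependent ℝ ![v₁, v₂] ∧ f = resTwo v₁ v₂ L}

/-- Vertex number `j` of the Kuhn simplex with base `p` and direction order `σ`. -/
def kvert {n : ℕ} (p : Fin n → ℕ) (σ : Equiv.Perm (Fin n)) (j : ℕ) : Fin n → ℕ :=
  fun i => p i + if (σ.symm i : ℕ) < j then 1 else 0

/-- The facet opposite to `j` carries all positive labels. -/
def KDoor {n : ℕ} (w : Fin (n + 1) → Fin n × Bool) (j : Fin (n + 1)) : Prop :=
  ∀ c, ∃ k, k ≠ j ∧ w k = (c, true)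

open Classical in
/-- Door indicator. -/
noncomputable def kind {n : ℕ} (w : Fin (n + 1) → Fin n × Bool) (j : Fin (n + 1)) : ZMod 2 :=
  if KDoor w j then 1 else 0

lemma kind_iff {n : ℕ} {w w' : Fin (n + 1) → Fin n × Bool} {j j' : Fin (n + 1)}
    (h : KDoor w j ↔ KDoor w' j') : kind w j = kind w' j' := by
  classical
  unfold kind
  exact if_congr h rfl rfl

lemma kind_ite {n : ℕ} {w : Fin (n + 1) → Fin n × Bool} {j : Fin (n + 1)} {P : Prop} [Decidable P]
    (h : KDoor w j ↔ P) : kind w j = if P then 1 else 0 := by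
  classical
  unfold kind
  exact if_congr h rfl rfl

lemma kind_sum {n : ℕ} (w : Fin (n + 1) → Fin n × Bool)
    (hw : ∀ a b, (w a).1 = (w b).1 → (w a).2 = (w b).2) : ∑ j, kind w j = 0 := by
  classical
  by_cases h : ∃ j0, KDoor w j0
  · obtain ⟨j0, hj0⟩ := h
    choose k hk hk2 using hj0
    have kinj : Function.Injective k := by
      intro a b hab
      have h1 := hk2 a
      rw [hab, hk2 b] at h1
      exact (Prod.ext_iff.1 h1).1.symm
    have ksurj : ∀ j, j ≠ j0 → ∃ c, k c = j := by
      intro j hj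
      have hc : (Finset.univ.image k) = Finset.univ.erase j0 := by
        apply Finset.eq_of_subset_of_card_le
        · intro x hx
          simp only [Finset.mem_image, Finset.mem_univ, true_and] at hx
          obtain ⟨c, rfl⟩ := hx
          simp [hk c]
        · rw [Finset.card_image_of_injective _ kinj]
          simp
      have : j ∈ Finset.univ.image k := by rw [hc]; simp [hj]
      simpa using this
    set c0 := (w j0).1 with hc0
    have hwj0 : w j0 = (c0, true) := by
      have := hw j0 (k c0) (by rw [hk2 c0])
      rw [hk2 c0] at this
      exact Prod.ext rfl this
    have key : ∀ j, KDoor w j ↔ (j = j0 ∨ j = k c0) := by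
      intro j
      constructor
      · intro hD
        by_contra hcon
        push Not at hcon
        obtain ⟨c, rfl⟩ := ksurj j hcon.1
        obtain ⟨k', hk', hw'⟩ := hD c
        by_cases h0 : k' = j0
        · subst h0
          rw [hwj0] at hw'
          have := (Prod.ext_iff.1 hw').1
          simp only at this
          exact hcon.2 (by rw [this])
        · obtain ⟨c', rfl⟩ := ksurj k' h0
          rw [hk2 c'] at hw'
          have := (Prod.ext_iff.1 hw').1
          simp only at this
          exact hk' (by rw [this])
      · rintro (rfl | rfl)
        · intro c; exact ⟨k c, hk c, hk2 c⟩
        · intro c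
          by_cases hc : c = c0
          · subst hc; exact ⟨j0, (hk c0).symm, hwj0⟩
          · exact ⟨k c, fun h => hc (kinj h), hk2 c⟩
    have : ∀ j, kind w j = if j ∈ ({j0, k c0} : Finset (Fin (n+1))) then 1 else 0 := by
      intro j
      simp [kind, key]
    simp only [this]
    rw [Finset.sum_ite_mem, Finset.univ_inter, Finset.sum_pair (hk c0).symm]
    decide
  · push Not at h
    apply Finset.sum_eq_zero
    intro j _
    simp [kind, h j]

lemma kvert_mono {n : ℕ} (p : Fin n → ℕ) (σ : Equiv.Perm (Fin n)) {j k : ℕ} (h : j ≤ k) (i) :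
    kvert p σ j i ≤ kvert p σ k i := by
  unfold kvert
  split_ifs <;> omega

lemma kvert_le {n : ℕ} (p : Fin n → ℕ) (σ : Equiv.Perm (Fin n)) (k : ℕ) (i) :
    kvert p σ k i ≤ p i + 1 := by
  unfold kvert
  split_ifs <;> omega

lemma le_kvert {n : ℕ} (p : Fin n → ℕ) (σ : Equiv.Perm (Fin n)) (k : ℕ) (i) :
    p i ≤ kvert p σ k i := by
  unfold kvert
  split_ifs <;> omega

/-- Labels of the vertices of a Kuhn simplex. -/
def klab {n : ℕ} (l : (Fin n → ℕ) → Fin n × Bool) (p : Fin n → ℕ) (σ : Equiv.Perm (Fin n)) :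
    Fin (n + 1) → Fin n × Bool := fun j => l (kvert p σ j)

lemma kind_congr {n : ℕ} {w w' : Fin (n + 1) → Fin n × Bool} {j : Fin (n + 1)}
    (h : ∀ k, k ≠ j → w k = w' k) : kind w j = kind w' j := by
  have : KDoor w j ↔ KDoor w' j := by
    unfold KDoor
    refine forall_congr' fun c => exists_congr fun k => ?_
    constructor
    · rintro ⟨a, b⟩; exact ⟨a, by rw [← h k a]; exact b⟩
    · rintro ⟨a, b⟩; exact ⟨a, by rw [h k a]; exact b⟩
  exact kind_iff this

lemma kswap {n : ℕ} (l : (Fin n → ℕ) → Fin n × Bool) (p : Fin n → ℕ)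
    (j : Fin (n + 1)) (h0 : j ≠ 0) (h1 : j ≠ Fin.last n) :
    ∑ σ : Equiv.Perm (Fin n), kind (klab l p σ) j = 0 := by
  have hj0 : 0 < (j : ℕ) := Nat.pos_of_ne_zero (fun h => h0 (Fin.ext h))
  have hj1 : (j : ℕ) < n := by
    have := Fin.val_lt_last h1
    exact this
  set a : Fin n := ⟨j - 1, by omega⟩
  set b : Fin n := ⟨j, hj1⟩
  have hab : a ≠ b := by
    intro h
    have := congrArg Fin.val h
    simp only [a, b] at this
    omega
  refine Finset.sum_involution (fun σ _ => σ * Equiv.swap a b) ?_ ?_ ?_ ?_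
  · intro σ _
    have : kind (klab l p (σ * Equiv.swap a b)) j = kind (klab l p σ) j := by
      apply kind_congr
      intro k hk
      unfold klab
      congr 1
      funext i
      unfold kvert
      have hk' : (k : ℕ) ≠ j := fun h => hk (Fin.ext h)
      have : ((σ * Equiv.swap a b).symm i) = Equiv.swap a b (σ.symm i) := by
        rw [Equiv.symm_apply_eq]
        simp [Equiv.Perm.mul_apply]
      rw [this]
      congr 1
      generalize σ.symm i = t
      rw [Equiv.swap_apply_def]
      split_ifs with h1 h2 h3 h4 h5 h6 h7 <;>
      simp_all [a, b] <;> omega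
    rw [this]
    exact CharTwo.add_self_eq_zero _
  · intro σ _ _ h
    have : Equiv.swap a b = 1 := by simpa using h
    rw [Equiv.swap_eq_one_iff] at this
    exact hab this
  · intro σ _; simp
  · intro σ _; simp [mul_assoc]

lemma kvert_rotate {m : ℕ} (p : Fin (m + 1) → ℕ) (σ : Equiv.Perm (Fin (m + 1))) (k : ℕ)
    (hk : k < m + 1) :
    kvert (p + Pi.single (σ 0) 1) (σ * finRotate (m + 1)) k = kvert p σ (k + 1) := by
  funext i
  unfold kvert
  obtain ⟨t, rfl⟩ := σ.surjective i
  have h1 : (σ * finRotate (m + 1)).symm (σ t) = (finRotate (m + 1)).symm t := by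
    rw [Equiv.symm_apply_eq]
    simp [Equiv.Perm.mul_apply]
  rw [h1]
  obtain ⟨s, rfl⟩ := (finRotate (m + 1)).surjective t
  simp only [Equiv.symm_apply_apply, Pi.add_apply, Pi.single_apply, σ.injective.eq_iff]
  rw [coe_finRotate]
  by_cases hs : s = Fin.last m
  · subst hs
    simp
    omega
  · have h2 : (finRotate (m+1) s : ℕ) = s + 1 := by
      rw [coe_finRotate, if_neg hs]
    have h3 : finRotate (m+1) s ≠ 0 := by
      intro h
      rw [h] at h2
      simp at h2
    simp only [hs, h3, if_false, Nat.add_lt_add_iff_right, add_zero]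

lemma kind_rotate {m : ℕ} (l : (Fin (m + 1) → ℕ) → Fin (m + 1) × Bool) (p : Fin (m + 1) → ℕ)
    (σ : Equiv.Perm (Fin (m + 1))) :
    kind (klab l p σ) 0 =
      kind (klab l (p + Pi.single (σ 0) 1) (σ * finRotate (m + 1))) (Fin.last _) := by
  have : KDoor (klab l p σ) 0 ↔
      KDoor (klab l (p + Pi.single (σ 0) 1) (σ * finRotate (m + 1))) (Fin.last _) := by
    unfold KDoor klab
    refine forall_congr' fun c => ?_
    constructor
    · rintro ⟨k, hk, h⟩
      obtain ⟨k', rfl⟩ := Fin.exists_succ_eq.2 hk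
      refine ⟨k'.castSucc, (Fin.castSucc_lt_last _).ne, ?_⟩
      rw [Fin.val_castSucc, kvert_rotate _ _ _ k'.2]
      simpa using h
    · rintro ⟨k, hk, h⟩
      obtain ⟨k', rfl⟩ := Fin.exists_castSucc_eq.2 hk
      refine ⟨k'.succ, Fin.succ_ne_zero _, ?_⟩
      rw [Fin.val_castSucc, kvert_rotate _ _ _ k'.2] at h
      simpa using h
  exact kind_iff this

/-- The box of base points. -/
def kbox (n M : ℕ) : Finset (Fin n → ℕ) := Fintype.piFinset fun _ => Finset.range M

lemma kshift {n M : ℕ} (i : Fin n) (h : (Fin n → ℕ) → ZMod 2)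
    (hM : ∀ p, p i = M → h p = 0) :
    ∑ p ∈ kbox n M, h (p + Pi.single i 1) = ∑ p ∈ kbox n M with p i ≠ 0, h p := by
  have e1 : ∑ p ∈ kbox n M, h (p + Pi.single i 1) =
      ∑ p ∈ kbox n M with p i + 1 ≠ M, h (p + Pi.single i 1) := by
    rw [Finset.sum_filter]
    apply Finset.sum_congr rfl
    intro p _
    split_ifs with hp
    · rfl
    · push Not at hp
      exact hM _ (by simp [hp])
  rw [e1]
  have hsub : ∀ p : Fin n → ℕ, p i ≠ 0 → p - Pi.single i 1 + Pi.single i 1 = p := by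
    intro p hp
    funext t
    by_cases ht : t = i
    · subst ht; simp; omega
    · simp [ht]
  refine Finset.sum_bij' (fun p _ => p + Pi.single i 1) (fun p _ => p - Pi.single i 1) ?_ ?_ ?_ ?_ ?_
  · intro p hp
    simp only [kbox, Finset.mem_filter, Fintype.mem_piFinset, Finset.mem_range] at hp ⊢
    refine ⟨fun t => ?_, by simp⟩
    by_cases ht : t = i
    · subst ht
      have := hp.1 t
      simp; omega
    · simpa [ht] using hp.1 t
  · intro p hp
    simp only [kbox, Finset.mem_filter, Fintype.mem_piFinset, Finset.mem_range] at hp ⊢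
    refine ⟨fun t => ?_, ?_⟩
    · have := hp.1 t
      simp only [Pi.sub_apply]
      omega
    · have := hp.1 i
      simp
      omega
  · intro p _; simp
  · intro p hp
    exact hsub p (Finset.mem_filter.1 hp).2
  · intro p _; rfl

lemma kunique {m M : ℕ} (hM2 : 2 ≤ M) (l : (Fin (m + 1) → ℕ) → Fin (m + 1) × Bool)
    (H0 : ∀ x, (∃ i, x i = 0) → ∀ c, l x = (c, true) → x c = 0 ∧ ∀ i < c, x i ≠ 0)
    (H1 : ∀ x, (∀ i, x i < M) → ∀ c, x c = 0 → (∀ i < c, x i ≠ 0) → l x = (c, true))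
    (p : Fin (m + 1) → ℕ) (σ : Equiv.Perm (Fin (m + 1))) (hp : p (σ (Fin.last m)) = 0) :
    KDoor (klab l p σ) (Fin.last _) ↔ (p = 0 ∧ σ = 1) := by
  constructor
  · intro h
    have h' : ∀ c, ∃ k : Fin (m + 1), l (kvert p σ k) = (c, true) := by
      intro c
      obtain ⟨k, hk, hk2⟩ := h c
      obtain ⟨k', rfl⟩ := Fin.exists_castSucc_eq.2 hk
      exact ⟨k', hk2⟩
    choose k hk using h'
    have hz : ∀ c, kvert p σ (k c) c = 0 ∧ ∀ i < c, kvert p σ (k c) i ≠ 0 := by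
      intro c
      refine H0 _ ⟨σ (Fin.last m), ?_⟩ c (hk c)
      unfold kvert
      rw [hp]
      simp
      exact Fin.le_last _
    have kmono : StrictMono k := by
      intro c c' hcc
      by_contra hcon
      push Not at hcon
      have := kvert_mono p σ (show (k c' : ℕ) ≤ k c from hcon) c
      have h1 := (hz c).1
      have h2 := (hz c').2 c hcc
      omega
    have kid : ∀ c, k c = c := fun c => le_antisymm kmono.apply_le (kmono.le_apply)
    simp only [kid] at hz
    constructor
    · funext c
      have := (hz c).1
      have h2 := le_kvert p σ c c
      simp; omega
    · have hge : ∀ c, c ≤ σ.symm c := by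
        intro c
        have := (hz c).1
        unfold kvert at this
        by_contra hcon
        push Not at hcon
        have h3 : ((σ.symm c : Fin (m+1)) : ℕ) < c := hcon
        simp [h3] at this
      have hp0 : ∀ c, p c = 0 := by
        intro c
        have := (hz c).1
        have h2 := le_kvert p σ c c
        omega
      have hle : ∀ c, σ.symm c ≤ c := by
        intro c
        by_cases hc : c = Fin.last m
        · subst hc; exact Fin.le_last _
        · have hc' : (c : ℕ) < m := Fin.val_lt_last hc
          have := (hz ⟨c + 1, by omega⟩).2 c (by rw [Fin.lt_def]; simp)
          unfold kvert at this
          rw [hp0] at this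
          simp at this
          rw [Fin.le_def]; omega
      have : σ.symm = 1 := by
        ext c
        simp [le_antisymm (hle c) (hge c)]
      have h4 : σ⁻¹ = 1 := this
      simpa using h4
  · rintro ⟨rfl, rfl⟩ c
    refine ⟨c.castSucc, (Fin.castSucc_lt_last _).ne, ?_⟩
    unfold klab
    apply H1
    · intro i
      have := kvert_le (0 : Fin (m+1) → ℕ) 1 (c.castSucc) i
      simp at this
      simp; omega
    · simp [kvert]
      exact le_refl c
    · intro i hi
      simp [kvert]
      exact hi

/-- Combinatorial lemma: there is no such labelling of the grid. -/
lemma no_labelling {m M : ℕ} (hM2 : 2 ≤ M) (l : (Fin (m + 1) → ℕ) → Fin (m + 1) × Bool)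
    (H0 : ∀ x, (∃ i, x i = 0) → ∀ c, l x = (c, true) → x c = 0 ∧ ∀ i < c, x i ≠ 0)
    (H1 : ∀ x, (∀ i, x i < M) → ∀ c, x c = 0 → (∀ i < c, x i ≠ 0) → l x = (c, true))
    (HM : ∀ x, ∀ i, x i = M → (l x).2 = false)
    (H : ∀ x y, (∀ i, x i ≤ y i ∧ y i ≤ x i + 1) → (l x).1 = (l y).1 → (l x).2 = (l y).2) :
    False := by
  have total : ∑ p ∈ kbox (m + 1) M, ∑ σ, ∑ j, kind (klab l p σ) j = 0 := by
    refine Finset.sum_eq_zero fun p _ => Finset.sum_eq_zero fun σ _ => kind_sum _ ?_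
    intro a b hab
    rcases le_total a b with h | h
    · refine H _ _ (fun i => ⟨kvert_mono p σ h i, ?_⟩) hab
      exact (kvert_le p σ b i).trans (Nat.succ_le_succ (le_kvert p σ a i))
    · refine (H _ _ (fun i => ⟨kvert_mono p σ h i, ?_⟩) hab.symm).symm
      exact (kvert_le p σ a i).trans (Nat.succ_le_succ (le_kvert p σ b i))
  have e1 : ∀ p, ∑ σ, ∑ j, kind (klab l p σ) j =
      ∑ σ, kind (klab l p σ) 0 + ∑ σ, kind (klab l p σ) (Fin.last _) := by
    intro p
    rw [Finset.sum_comm, Fin.sum_univ_succ, Fin.sum_univ_castSucc]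
    have : ∑ i : Fin m, ∑ σ, kind (klab l p σ) (Fin.castSucc i).succ = 0 := by
      refine Finset.sum_eq_zero fun i _ => kswap l p _ (Fin.succ_ne_zero _) ?_
      intro h
      have := congrArg Fin.val h
      simp at this
      omega
    rw [this, zero_add, Fin.succ_last]
  have e2 : ∀ p, ∑ σ, kind (klab l p σ) 0 =
      ∑ σ, kind (klab l (p + Pi.single (σ (Fin.last m)) 1) σ) (Fin.last _) := by
    intro p
    refine Fintype.sum_equiv (Equiv.mulRight (finRotate (m + 1))) _ _ ?_
    intro σ
    rw [kind_rotate]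
    simp
  simp only [e1, e2, Finset.sum_add_distrib] at total
  rw [Finset.sum_comm, Finset.sum_comm (s := kbox (m + 1) M), ← Finset.sum_add_distrib] at total
  have e3 : ∀ σ : Equiv.Perm (Fin (m + 1)),
      (∑ p ∈ kbox (m + 1) M, kind (klab l (p + Pi.single (σ (Fin.last m)) 1) σ) (Fin.last _)) +
      ∑ p ∈ kbox (m + 1) M, kind (klab l p σ) (Fin.last _) = if σ = 1 then 1 else 0 := by
    intro σ
    rw [kshift (σ (Fin.last m)) (fun p => kind (klab l p σ) (Fin.last _))]
    · rw [← Finset.sum_filter_add_sum_filter_not (kbox (m + 1) M)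
        (fun p => p (σ (Fin.last m)) ≠ 0) (fun p => kind (klab l p σ) (Fin.last _)), ← add_assoc,
        CharTwo.add_self_eq_zero, zero_add]
      have e4 : ∀ p ∈ (kbox (m+1) M).filter (fun p => ¬ p (σ (Fin.last m)) ≠ 0),
          kind (klab l p σ) (Fin.last _) = if p = 0 then (if σ = 1 then 1 else 0) else 0 := by
        intro p hp
        have hp0 := (Finset.mem_filter.1 hp).2
        push Not at hp0
        rw [← ite_and]
        exact kind_ite (kunique hM2 l H0 H1 p σ hp0)
      rw [Finset.sum_congr rfl e4, Finset.sum_ite_eq', if_pos]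
      simp [kbox]
      omega
    · intro p hp
      have : ¬ KDoor (klab l p σ) (Fin.last _) := by
        intro h
        obtain ⟨k, hk, h2⟩ := h 0
        obtain ⟨k', rfl⟩ := Fin.exists_castSucc_eq.2 hk
        have h3 := HM (kvert p σ (k'.castSucc : Fin (m+2))) (σ (Fin.last m)) (by
          unfold kvert
          simp [hp]
          exact Fin.le_last _)
        unfold klab at h2
        rw [h2] at h3
        simp at h3
      simp [kind, this]
  rw [Finset.sum_congr rfl (fun σ _ => e3 σ)] at total
  simp at total

lemma exists_col {m : ℕ} (y : Fin m → ℝ) : ∃ c : Fin (m + 1), ∀ i, ∀ z : ℤ,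
    1 / (2 * ((m : ℝ) + 1)) ≤ |y i + (c : ℕ) / ((m : ℝ) + 1) - z| := by
  by_contra hcon
  push Not at hcon
  choose i z hz using hcon
  obtain ⟨c, c', hne, hi⟩ := Fintype.exists_ne_map_eq_of_card_lt i (by simp)
  have hm : (0 : ℝ) < (m : ℝ) + 1 := by positivity
  have h1 := hz c
  have h2 := hz c'
  rw [hi] at h1
  generalize y (i c') = t at h1 h2
  generalize z c = a at h1
  generalize z c' = b at h2
  have e : 1 / (2 * ((m : ℝ) + 1)) * ((m : ℝ) + 1) = 1 / 2 := by field_simp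
  have e1 : ((c : ℕ) : ℝ) / ((m : ℝ) + 1) * ((m : ℝ) + 1) = (c : ℕ) := by field_simp
  have e2 : ((c' : ℕ) : ℝ) / ((m : ℝ) + 1) * ((m : ℝ) + 1) = (c' : ℕ) := by field_simp
  rw [abs_lt] at h1 h2
  have h3 : (((c : ℕ) : ℝ) - (c' : ℕ) - (a - b) * ((m : ℝ) + 1)) < 1 := by
    nlinarith [h1.2, h2.1]
  have h4 : -1 < (((c : ℕ) : ℝ) - (c' : ℕ) - (a - b) * ((m : ℝ) + 1)) := by
    nlinarith [h1.1, h2.2]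
  have h5 : ((c : ℕ) : ℤ) - (c' : ℕ) - (a - b) * ((m : ℤ) + 1) < 1 := by exact_mod_cast h3
  have h6 : -1 < ((c : ℕ) : ℤ) - (c' : ℕ) - (a - b) * ((m : ℤ) + 1) := by exact_mod_cast h4
  have h7 : ((c : ℕ) : ℤ) - (c' : ℕ) = (a - b) * ((m : ℤ) + 1) := by omega
  have hc := c.2
  have hc' := c'.2
  rcases lt_trichotomy (a - b) 0 with h | h | h
  · nlinarith
  · rw [h] at h7
    apply hne
    apply Fin.ext
    omega
  · nlinarith

lemma floor_eq_of_sep {ε t t' : ℝ} (h : ∀ z : ℤ, ε ≤ |t - z|) (h' : ∀ z : ℤ, ε ≤ |t' - z|)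
    (hd : |t - t'| < 2 * ε) : ⌊t⌋ = ⌊t'⌋ := by
  have key : ∀ t t' : ℝ, (∀ z : ℤ, ε ≤ |t - z|) → (∀ z : ℤ, ε ≤ |t' - z|) →
    |t - t'| < 2 * ε → ¬ ⌊t⌋ < ⌊t'⌋ := by
    intro t t' h h' hd hlt
    have h1 : t < ⌊t'⌋ := Int.floor_lt.1 hlt
    have h2 := Int.floor_le t'
    have h3 := h ⌊t'⌋
    have h4 := h' ⌊t'⌋
    rw [abs_of_neg (by linarith)] at h3
    rw [abs_of_nonneg (by linarith)] at h4
    rw [abs_lt] at hd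
    linarith [hd.1]
  have a := key t t' h h' hd
  have b := key t' t h' h (by rwa [abs_sub_comm])
  omega

lemma no_inj_scaled {m : ℕ} (f : (Fin (m + 1) → ℝ) → (Fin m → ℝ))
    (hf : UniformContinuousOn f (Set.Icc 0 1))
    (hsep : ∀ x ∈ Set.Icc (0 : Fin (m + 1) → ℝ) 1, ∀ y ∈ Set.Icc (0 : Fin (m + 1) → ℝ) 1,
      ∀ i, x i = 0 → y i = 1 → 1 ≤ dist (f x) (f y)) : False := by
  have hm : (0 : ℝ) < (m : ℝ) + 1 := by positivity
  rw [Metric.uniformContinuousOn_iff] at hf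
  obtain ⟨δ, hδ, hf⟩ := hf (1 / ((m : ℝ) + 1)) (by positivity)
  obtain ⟨N0, hN0⟩ := exists_nat_gt (1 / δ)
  set N := N0 + 1 with hN
  have hNpos : (0 : ℝ) < N := by rw [hN]; positivity
  have hNδ : 1 / (N : ℝ) < δ := by
    rw [div_lt_iff₀ hNpos]
    rw [div_lt_iff₀ hδ] at hN0
    have : (N : ℝ) = N0 + 1 := by rw [hN]; push_cast; ring
    rw [this]; nlinarith
  let g : (Fin (m + 1) → ℕ) → (Fin (m + 1) → ℝ) := fun x i => ((x i : ℝ) - 1) / N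
  choose col hcol using (exists_col (m := m))
  let F : (Fin (m + 1) → ℕ) → Fin m → ℤ :=
    fun x i => ⌊f (g x) i + ((col (f (g x)) : ℕ) : ℝ) / ((m : ℝ) + 1)⌋
  let inner : (Fin (m + 1) → ℕ) → Prop := fun x => ∀ i, 1 ≤ x i ∧ x i ≤ N + 1
  have hg : ∀ x, inner x → g x ∈ Set.Icc (0 : Fin (m + 1) → ℝ) 1 := by
    intro x hx
    constructor
    · intro i
      have h1 : (1 : ℝ) ≤ x i := by exact_mod_cast (hx i).1
      exact div_nonneg (by linarith) hNpos.le
    · intro i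
      have h1 : (x i : ℝ) ≤ N + 1 := by exact_mod_cast (hx i).2
      change ((x i : ℝ) - 1) / N ≤ 1
      rw [div_le_one hNpos]; linarith
  let Spec : (Fin (m + 1) → ℕ) → Fin (m + 1) × Bool → Prop := fun x l =>
    (N + 2 ≤ x l.1 ∧ l.2 = false) ∨
    ((∀ i, x i < N + 2) ∧ x l.1 = 0 ∧ (∀ i < l.1, x i ≠ 0) ∧ l.2 = true) ∨
    (inner x ∧ l.1 = col (f (g x)) ∧ (l.2 = true ↔ ∃ y, inner y ∧ y l.1 = 1 ∧
      col (f (g y)) = l.1 ∧ F y = F x))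
  have hex : ∀ x, ∃ l, Spec x l := by
    intro x
    classical
    by_cases h1 : ∃ i, N + 2 ≤ x i
    · obtain ⟨i, hi⟩ := h1
      exact ⟨(i, false), Or.inl ⟨hi, rfl⟩⟩
    · push Not at h1
      by_cases h2 : ∃ i, x i = 0
      · obtain ⟨c, hc, hmin⟩ := WellFounded.has_min (wellFounded_lt (α := Fin (m + 1)))
          {i | x i = 0} h2
        exact ⟨(c, true), Or.inr (Or.inl ⟨h1, hc, fun i hi h => hmin i h hi, rfl⟩)⟩
      · push Not at h2
        refine ⟨(col (f (g x)), decide (∃ y, inner y ∧ y (col (f (g x))) = 1 ∧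
          col (f (g y)) = col (f (g x)) ∧ F y = F x)), Or.inr (Or.inr ⟨?_, rfl, by simp⟩)⟩
        intro i
        have := h1 i
        have := h2 i
        omega
  choose l hl using hex
  refine no_labelling (M := N + 2) (by omega) l ?_ ?_ ?_ ?_
  · rintro x ⟨i, hi⟩ c hc
    have := hl x
    rw [hc] at this
    rcases this with ⟨_, h⟩ | ⟨_, h1, h2, _⟩ | ⟨h1, _⟩
    · simp at h
    · exact ⟨h1, h2⟩
    · have := h1 i; omega
  · intro x hx c hc hmin
    rcases hl x with ⟨h, _⟩ | ⟨_, h1, h2, h3⟩ | ⟨h1, _⟩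
    · have := hx (l x).1; omega
    · refine Prod.ext ?_ h3
      rcases lt_trichotomy (l x).1 c with h | h | h
      · exact absurd h1 (hmin _ h)
      · exact h
      · exact absurd hc (h2 _ h)
    · have := h1 c; omega
  · intro x i hi
    rcases hl x with ⟨_, h⟩ | ⟨h1, _⟩ | ⟨h1, _⟩
    · exact h
    · have := h1 i; omega
    · have := h1 i; omega
  · intro x y hxy hc
    rcases hl x with ⟨hx1, hx2⟩ | ⟨hx1, hx2, hx3, hx4⟩ | ⟨hx1, hx2, hx3⟩ <;>
    rcases hl y with ⟨hy1, hy2⟩ | ⟨hy1, hy2, hy3, hy4⟩ | ⟨hy1, hy2, hy3⟩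
    · rw [hx2, hy2]
    · have := hy1 (l x).1; have := hxy (l x).1; omega
    · have := hy1 (l x).1; have := hxy (l x).1; omega
    · rw [hc] at hx2; have := hxy (l y).1; omega
    · rw [hx4, hy4]
    · rw [hx4]
      symm
      rw [hy3]
      rw [hc] at hx2
      have h1 := hxy (l y).1
      have h2 := hy1 (l y).1
      exact ⟨y, hy1, by omega, hy2.symm, rfl⟩
    · rw [hy2]
      rw [Bool.eq_false_iff]
      intro htrue
      obtain ⟨z, hz1, hz2, hz3, hz4⟩ := hx3.1 htrue
      have hxc : x (l x).1 = N + 1 := by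
        rw [← hc] at hy1
        have h1 := hxy (l x).1
        have h2 := hx1 (l x).1
        omega
      have hd := hsep (g z) (hg z hz1) (g x) (hg x hx1) (l x).1 (by simp [g, hz2])
        (by simp only [g, hxc]; push_cast; rw [add_sub_cancel_right]; exact div_self hNpos.ne')
      refine absurd hd (not_le.2 ?_)
      rw [dist_pi_lt_iff one_pos]
      intro i
      have h5 : F z i = F x i := by rw [hz4]
      simp only [F] at h5
      rw [hz3, ← hx2] at h5
      have h6 := Int.abs_sub_lt_one_of_floor_eq_floor h5
      rw [Real.dist_eq]
      rwa [add_sub_add_right_eq_sub] at h6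
    · have := hx1 (l y).1; have := hxy (l y).1; omega
    · have hFxy : F x = F y := by
        funext i
        simp only [F]
        have hcc : col (f (g x)) = col (f (g y)) := by rw [← hx2, ← hy2, hc]
        apply floor_eq_of_sep (ε := 1 / (2 * ((m : ℝ) + 1)))
        · exact hcol _ i
        · exact hcol _ i
        · rw [hcc]
          have hdg : dist (g x) (g y) < δ := by
            refine lt_of_le_of_lt ?_ hNδ
            rw [dist_pi_le_iff (by positivity)]
            intro i
            rw [Real.dist_eq]
            simp only [g]
            rw [← sub_div, abs_div, abs_of_pos hNpos]
            apply div_le_div_of_nonneg_right _ hNpos.le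
            have h1 : (x i : ℝ) ≤ y i := by exact_mod_cast (hxy i).1
            have h2 : (y i : ℝ) ≤ x i + 1 := by exact_mod_cast (hxy i).2
            rw [abs_le]; constructor <;> linarith
          have h7 := hf _ (hg x hx1) _ (hg y hy1) hdg
          rw [dist_pi_lt_iff (by positivity)] at h7
          have h8 := h7 i
          rw [Real.dist_eq] at h8
          have e : 2 * (1 / (2 * ((m : ℝ) + 1))) = 1 / ((m : ℝ) + 1) := by field_simp
          rw [e]
          rwa [add_sub_add_right_eq_sub]
      rw [Bool.eq_iff_iff, hx3, hy3, hc, hFxy]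

lemma no_inj {m : ℕ} (f : (Fin (m + 1) → ℝ) → (Fin m → ℝ))
    (hf : ContinuousOn f (Set.Icc 0 1)) (hinj : Set.InjOn f (Set.Icc 0 1)) : False := by
  have hK : IsCompact (Set.Icc (0 : Fin (m + 1) → ℝ) 1) := isCompact_Icc
  -- uniform separation
  have hc : ∃ c > 0, ∀ x ∈ Set.Icc (0 : Fin (m + 1) → ℝ) 1, ∀ y ∈ Set.Icc (0 : Fin (m + 1) → ℝ) 1,
      1 ≤ dist x y → c ≤ dist (f x) (f y) := by
    let S : Set ((Fin (m + 1) → ℝ) × (Fin (m + 1) → ℝ)) :=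
      (Set.Icc 0 1 ×ˢ Set.Icc 0 1) ∩ {q | 1 ≤ dist q.1 q.2}
    have hS : IsCompact S := (hK.prod hK).inter_right
      (isClosed_le continuous_const (continuous_fst.dist continuous_snd))
    rcases S.eq_empty_or_nonempty with h | h
    · refine ⟨1, one_pos, fun x hx y hy hxy => ?_⟩
      have : (x, y) ∈ S := ⟨⟨hx, hy⟩, hxy⟩
      rw [h] at this
      exact this.elim
    · have hcont : ContinuousOn (fun q : (Fin (m + 1) → ℝ) × (Fin (m + 1) → ℝ) =>
          dist (f q.1) (f q.2)) S := by
        refine continuous_dist.comp_continuousOn (ContinuousOn.prodMk ?_ ?_)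
        · exact hf.comp continuousOn_fst (fun q hq => hq.1.1)
        · exact hf.comp continuousOn_snd (fun q hq => hq.1.2)
      obtain ⟨q, hq, hmin⟩ := hS.exists_isMinOn h hcont
      refine ⟨_, ?_, fun x hx y hy hxy => hmin (show (x, y) ∈ S from ⟨⟨hx, hy⟩, hxy⟩)⟩
      show 0 < dist (f q.1) (f q.2)
      rw [dist_pos]
      intro heq
      have := hinj hq.1.1 hq.1.2 heq
      have h2 : 1 ≤ dist q.1 q.2 := hq.2
      rw [this, dist_self] at h2
      linarith
  obtain ⟨c, hc, hsep⟩ := hc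
  refine no_inj_scaled (fun x => c⁻¹ • f x) ?_ ?_
  · exact hK.uniformContinuousOn_of_continuous (hf.const_smul c⁻¹ :)
  · intro x hx y hy i hxi hyi
    have h1 : 1 ≤ dist x y := by
      have := dist_le_pi_dist x y i
      rw [hxi, hyi] at this
      simpa using this
    have := hsep x hx y hy h1
    rw [dist_smul₀, Real.norm_of_nonneg (by positivity)]
    rw [inv_mul_eq_div, le_div_iff₀ hc]
    linarith

lemma no_inj_box {m : ℕ} {α : Type*} [TopologicalSpace α] [T2Space α]
    {X : Set α} (hX : HasParamDim X m) (W : Set (Fin (m + 1) → ℝ)) (hW : IsOpen W)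
    (hWn : W.Nonempty) (Φ : (Fin (m + 1) → ℝ) → α) (hΦ : Continuous Φ) (hinj : Set.InjOn Φ W)
    (hsub : ∀ w ∈ W, Φ w ∈ X) : False := by
  obtain ⟨n, U, par, hU, hcont, hpinj, rfl⟩ := hX
  have hcov : ∀ i, ∃ K : ℕ → Set (Fin m → ℝ), (∀ j, IsCompact (K j)) ∧ ⋃ j, K j = U i := by
    intro i
    have : IsSigmaCompact (U i) := by
      obtain ⟨F, hF, -, hU', -⟩ := (hU i).exists_iUnion_isClosed
      rw [← hU']
      exact isSigmaCompact_iUnion _ (fun j => isSigmaCompact_univ.of_isClosed_subset (hF j) (Set.subset_univ _))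
    exact this
  choose K hK hKU using hcov
  let C : Fin n × ℕ → Set α := fun q => par q.1 '' K q.1 q.2
  have hsubK : ∀ i j, K i j ⊆ U i := fun i j => by rw [← hKU i]; exact Set.subset_iUnion _ _
  have hC : ∀ q, IsCompact (C q) := fun q =>
    (hK q.1 q.2).image_of_continuousOn ((hcont q.1).mono (hsubK _ _))
  -- Baire
  have hbaire : ∃ q, (interior (Φ ⁻¹' C q) ∩ W).Nonempty := by
    let D : Option (Fin n × ℕ) → Set (Fin (m + 1) → ℝ) := fun o => o.elim Wᶜ (fun q => Φ ⁻¹' C q)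
    have hD : ∀ o, IsClosed (D o) := by
      intro o
      cases o with
      | none => exact hW.isClosed_compl
      | some q => exact (hC q).isClosed.preimage hΦ
    have hDU : ⋃ o, D o = Set.univ := by
      rw [Set.eq_univ_iff_forall]
      intro x
      by_cases hx : x ∈ W
      · obtain ⟨i, u, hu, hux⟩ := Set.mem_iUnion.1 (hsub x hx)
        rw [← hKU i] at hu
        obtain ⟨j, hj⟩ := Set.mem_iUnion.1 hu
        exact Set.mem_iUnion.2 ⟨some (i, j), ⟨u, hj, hux⟩⟩
      · exact Set.mem_iUnion.2 ⟨none, hx⟩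
    have hdense := dense_iUnion_interior_of_closed hD hDU
    obtain ⟨x, hxW, hx⟩ := hdense.inter_open_nonempty W hW hWn
    obtain ⟨o, ho⟩ := Set.mem_iUnion.1 hx
    cases o with
    | none => exact absurd hxW (interior_subset ho)
    | some q => exact ⟨q, x, ho, hxW⟩
  obtain ⟨q, x, hx⟩ := hbaire
  obtain ⟨r, hr, hball⟩ := Metric.isOpen_iff.1 (isOpen_interior.inter hW) x hx
  let A : (Fin (m + 1) → ℝ) → (Fin (m + 1) → ℝ) := fun t => x + (r / 2) • t
  have hAc : Continuous A := by fun_prop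
  have hA : ∀ t ∈ Set.Icc (0 : Fin (m + 1) → ℝ) 1, A t ∈ interior (Φ ⁻¹' C q) ∩ W := by
    intro t ht
    apply hball
    rw [mem_ball_iff_norm]
    simp only [A, add_sub_cancel_left]
    rw [norm_smul, Real.norm_of_nonneg (by positivity)]
    have : ‖t‖ ≤ 1 := by
      rw [pi_norm_le_iff_of_nonneg zero_le_one]
      intro i
      rw [Real.norm_of_nonneg (ht.1 i)]
      exact ht.2 i
    nlinarith
  have hgex : ∀ t ∈ Set.Icc (0 : Fin (m + 1) → ℝ) 1, ∃ u ∈ K q.1 q.2, par q.1 u = Φ (A t) :=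
    fun t ht => interior_subset (s := Φ ⁻¹' C q) (hA t ht).1
  choose! g hgK hg using hgex
  have hpinj' : Set.InjOn (par q.1) (K q.1 q.2) := (hpinj q.1).mono (hsubK _ _)
  refine no_inj g ?_ ?_
  · -- continuity through compactness
    rw [continuousOn_iff_isClosed]
    intro s hs
    have hcomp : IsCompact (par q.1 '' (K q.1 q.2 ∩ s)) :=
      ((hK q.1 q.2).inter_right hs).image_of_continuousOn
        ((hcont q.1).mono (Set.inter_subset_left.trans (hsubK _ _)))
    refine ⟨(Φ ∘ A) ⁻¹' (par q.1 '' (K q.1 q.2 ∩ s)), hcomp.isClosed.preimage (hΦ.comp hAc), ?_⟩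
    ext t
    constructor
    · rintro ⟨h1, h2⟩
      exact ⟨⟨g t, ⟨hgK t h2, h1⟩, hg t h2⟩, h2⟩
    · rintro ⟨⟨u, ⟨hu1, hu2⟩, hu3⟩, h2⟩
      refine ⟨?_, h2⟩
      have : g t = u := hpinj' (hgK t h2) hu1 (by rw [hg t h2, hu3]; rfl)
      show g t ∈ s
      rw [this]; exact hu2
  · intro t ht t' ht' h
    have h1 : Φ (A t) = Φ (A t') := by rw [← hg t ht, ← hg t' ht', h]
    have h2 := hinj (hA t ht).2 (hA t' ht').2 h1
    simp only [A, add_right_inj] at h2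
    exact smul_right_injective _ (by positivity : r / 2 ≠ 0) h2

lemma exists_ne_zero_mem (L : AddSubgroup (Fin 2 → ℤ)) (hL : L ≠ ⊥) :
    ∃ g : L, (g : Fin 2 → ℤ) 0 ≠ 0 ∨ (g : Fin 2 → ℤ) 1 ≠ 0 := by
  obtain ⟨g, hg0⟩ := AddSubgroup.ne_bot_iff_exists_ne_zero.1 hL
  refine ⟨g, ?_⟩
  by_contra hcon
  push Not at hcon
  apply hg0
  apply Subtype.ext
  funext i
  fin_cases i
  · exact hcon.1
  · exact hcon.2

lemma resHigher_cont (θ : ℝ) (L : AddSubgroup (Fin 2 → ℤ)) :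
    Continuous (fun v => resHigher θ v L) := by
  unfold resHigher
  refine continuous_pi fun m => ?_
  have : Continuous (fun v : V2 => (rotM θ).mulVec v) := continuous_const.matrix_mulVec continuous_id
  fun_prop

lemma resHigher_inj (θ : ℝ) (hθ : Real.sin θ ≠ 0) (L : AddSubgroup (Fin 2 → ℤ)) (hL : L ≠ ⊥) :
    Function.Injective (fun v => resHigher θ v L) := by
  intro v v' h
  obtain ⟨g, hg⟩ := exists_ne_zero_mem L hL
  have h1 := congrFun h g
  have h10 := congrFun h1 0
  have h11 := congrFun h1 1
  simp only [resHigher, rotM, Matrix.mulVec, dotProduct, Fin.sum_univ_two, Pi.add_apply,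
    Pi.smul_apply, smul_eq_mul, Matrix.of_apply, Matrix.cons_val_zero, Matrix.cons_val_one] at h10 h11
  set a : ℝ := (((g : Fin 2 → ℤ) 0 : ℤ) : ℝ) with ha
  set b : ℝ := (((g : Fin 2 → ℤ) 1 : ℤ) : ℝ) with hb
  have hab : a ≠ 0 ∨ b ≠ 0 := by
    rcases hg with h | h
    · left; rw [ha]; exact_mod_cast h
    · right; rw [hb]; exact_mod_cast h
  have hD : (a + b * Real.cos θ) ^ 2 + (b * Real.sin θ) ^ 2 ≠ 0 := by
    intro h0
    have e1 : b * Real.sin θ = 0 := by nlinarith [sq_nonneg (a + b * Real.cos θ), sq_nonneg (b * Real.sin θ)]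
    have e2 : a + b * Real.cos θ = 0 := by nlinarith [sq_nonneg (a + b * Real.cos θ), sq_nonneg (b * Real.sin θ)]
    have hb0 : b = 0 := by simpa [hθ] using e1
    rw [hb0] at e2
    simp at e2
    rcases hab with h | h
    · exact h e2
    · exact h hb0
  have k0 : ((a + b * Real.cos θ) ^ 2 + (b * Real.sin θ) ^ 2) * (v 0 - v' 0) = 0 := by
    linear_combination (a + b * Real.cos θ) * h10 + (b * Real.sin θ) * h11
  have k1 : ((a + b * Real.cos θ) ^ 2 + (b * Real.sin θ) ^ 2) * (v 1 - v' 1) = 0 := by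
    linear_combination (a + b * Real.cos θ) * h11 - (b * Real.sin θ) * h10
  funext i
  fin_cases i
  · exact sub_eq_zero.1 ((mul_eq_zero.1 k0).resolve_left hD)
  · exact sub_eq_zero.1 ((mul_eq_zero.1 k1).resolve_left hD)

lemma sin_ne (k : ℕ) (hk : 3 ≤ k) (ε : ℤ) (hε : ε = 1 ∨ ε = -1) :
    Real.sin (ε * (2 * Real.pi / k)) ≠ 0 := by
  have hk' : (3 : ℝ) ≤ k := by exact_mod_cast hk
  have : 0 < Real.sin (2 * Real.pi / k) := by
    apply Real.sin_pos_of_pos_of_lt_pi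
    · have := Real.pi_pos; positivity
    · rw [div_lt_iff₀ (by linarith)]
      nlinarith [Real.pi_pos]
  rcases hε with rfl | rfl
  · simpa using this.ne'
  · simpa using this.ne'

lemma isOpen_ne_zero : IsOpen {v : V2 | v ≠ 0} := isOpen_ne

lemma higher_case (k : ℕ) (hk : 3 ≤ k) (L : AddSubgroup (Fin 2 → ℤ)) (hL : L ≠ ⊥) :
    HasParamDim (XHigher k L) 2 ∧ ¬ HasParamDim (XHigher k L) 1 := by
  constructor
  · let e : Fin 2 → ℤ := ![1, -1]
    have he : ∀ i, e i = 1 ∨ e i = -1 := by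
      intro i; fin_cases i <;> simp [e]
    refine ⟨2, fun _ => {v | v ≠ 0}, fun i v => resHigher (e i * (2 * Real.pi / k)) v L,
      fun _ => isOpen_ne_zero, fun i => (resHigher_cont _ L).continuousOn,
      fun i => (resHigher_inj _ (sin_ne k hk _ (he i)) L hL).injOn, ?_⟩
    ext f
    simp only [XHigher, Set.mem_ofPred_eq, Set.mem_iUnion, Set.mem_image]
    constructor
    · rintro ⟨v, ε, hv, hε, rfl⟩
      rcases hε with rfl | rfl
      · exact ⟨0, v, hv, by simp [e]⟩
      · exact ⟨1, v, hv, by simp [e]⟩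
    · rintro ⟨i, v, hv, rfl⟩
      exact ⟨v, e i, hv, he i, rfl⟩
  · intro h
    refine no_inj_box h {v : V2 | v ≠ 0} isOpen_ne_zero ⟨fun _ => 1, ?_⟩
      (fun v => resHigher ((1 : ℤ) * (2 * Real.pi / k)) v L) (resHigher_cont _ L)
      (resHigher_inj _ (sin_ne k hk _ (Or.inl rfl)) L hL).injOn ?_
    · intro h
      have := congrFun h 0
      simp at this
    · intro v hv
      exact ⟨v, 1, hv, Or.inl rfl, rfl⟩

lemma linind_iff (v w : V2) : LinearIndependent ℝ ![v, w] ↔ v 0 * w 1 - v 1 * w 0 ≠ 0 := by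
  rw [LinearIndependent.pair_iff]
  constructor
  · intro h h0
    have e1 := h (w 0) (-(v 0)) (by
      funext i; fin_cases i
      · simp; ring
      · simp; linarith)
    have e2 := h (w 1) (-(v 1)) (by
      funext i; fin_cases i
      · simp; linarith
      · simp; ring)
    have := h 1 0 (by
      funext i; fin_cases i
      · simpa using e1.2
      · simpa using e2.2)
    exact one_ne_zero this.1
  · intro hD s t h
    have h0 := congrFun h 0
    have h1 := congrFun h 1
    simp at h0 h1
    have k0 : (v 0 * w 1 - v 1 * w 0) * s = 0 := by linear_combination w 1 * h0 - w 0 * h1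
    have k1 : (v 0 * w 1 - v 1 * w 0) * t = 0 := by linear_combination v 0 * h1 - v 1 * h0
    exact ⟨(mul_eq_zero.1 k0).resolve_left hD, (mul_eq_zero.1 k1).resolve_left hD⟩

lemma rank_two (L : AddSubgroup (Fin 2 → ℤ)) (x y : L)
    (hxy : (x : Fin 2 → ℤ) 0 * (y : Fin 2 → ℤ) 1 - (x : Fin 2 → ℤ) 1 * (y : Fin 2 → ℤ) 0 ≠ 0) :
    Module.finrank ℤ L = 2 := by
  apply le_antisymm
  · have := Submodule.finrank_le (AddSubgroup.toIntSubmodule L)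
    rw [Module.finrank_fin_fun] at this
    exact this
  · have hli : LinearIndependent ℤ ![x, y] := by
      rw [LinearIndependent.pair_iff]
      intro s t h
      have h' := congrArg Subtype.val h
      have h0 := congrFun h' 0
      have h1 := congrFun h' 1
      simp at h0 h1
      have k0 : ((x : Fin 2 → ℤ) 0 * (y : Fin 2 → ℤ) 1 - (x : Fin 2 → ℤ) 1 * (y : Fin 2 → ℤ) 0) * s
        = 0 := by linear_combination (y : Fin 2 → ℤ) 1 * h0 - (y : Fin 2 → ℤ) 0 * h1
      have k1 : ((x : Fin 2 → ℤ) 0 * (y : Fin 2 → ℤ) 1 - (x : Fin 2 → ℤ) 1 * (y : Fin 2 → ℤ) 0) * t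
        = 0 := by linear_combination (x : Fin 2 → ℤ) 0 * h1 - (x : Fin 2 → ℤ) 1 * h0
      exact ⟨(mul_eq_zero.1 k0).resolve_left hxy, (mul_eq_zero.1 k1).resolve_left hxy⟩
    have : Module.Finite ℤ L := inferInstanceAs (Module.Finite ℤ (AddSubgroup.toIntSubmodule L))
    have := hli.fintype_card_le_finrank
    simpa using this

lemma rank_one (L : AddSubgroup (Fin 2 → ℤ)) (hL : L ≠ ⊥) (h : ∀ x y : L,
    (x : Fin 2 → ℤ) 0 * (y : Fin 2 → ℤ) 1 - (x : Fin 2 → ℤ) 1 * (y : Fin 2 → ℤ) 0 = 0) :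
    Module.finrank ℤ L = 1 := by
  have : Module.Finite ℤ L := inferInstanceAs (Module.Finite ℤ (AddSubgroup.toIntSubmodule L))
  have : Nontrivial L := (AddSubgroup.nontrivial_iff_ne_bot L).2 hL
  have hpos : 0 < Module.finrank ℤ L := Module.finrank_pos
  by_contra hne
  have h2 : 2 ≤ Module.finrank ℤ L := by omega
  obtain ⟨f, hf⟩ := exists_linearIndependent_of_le_finrank h2
  have hxy := h (f 0) (f 1)
  have hf' : LinearIndependent ℤ ![f 0, f 1] := by
    convert hf using 1
    funext i; fin_cases i <;> rfl
  rw [LinearIndependent.pair_iff] at hf'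
  generalize f 0 = x at *
  generalize f 1 = y at *
  have e1 := hf' ((y : Fin 2 → ℤ) 0) (-((x : Fin 2 → ℤ) 0)) (by
    apply Subtype.ext
    funext i; fin_cases i
    · simp; ring
    · simp; linarith)
  have e2 := hf' ((y : Fin 2 → ℤ) 1) (-((x : Fin 2 → ℤ) 1)) (by
    apply Subtype.ext
    funext i; fin_cases i
    · simp; linarith
    · simp; ring)
  have := hf' 1 0 (by
    apply Subtype.ext
    funext i; fin_cases i
    · simpa using e1.2
    · simpa using e2.2)
  exact one_ne_zero this.1

/-- Chart of the rank two case. -/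
noncomputable def parTwo (L : AddSubgroup (Fin 2 → ℤ)) (q : Fin 4 → ℝ) : L → V2 :=
  resTwo ![q 0, q 1] ![q 2, q 3] L

lemma parTwo_cont (L : AddSubgroup (Fin 2 → ℤ)) : Continuous (parTwo L) := by
  unfold parTwo resTwo
  refine continuous_pi fun m => continuous_pi fun i => ?_
  fin_cases i <;> simp <;> fun_prop

lemma parTwo_inj (L : AddSubgroup (Fin 2 → ℤ)) (x y : L)
    (hxy : (x : Fin 2 → ℤ) 0 * (y : Fin 2 → ℤ) 1 - (x : Fin 2 → ℤ) 1 * (y : Fin 2 → ℤ) 0 ≠ 0) :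
    Function.Injective (parTwo L) := by
  intro q q' h
  have hx := congrFun h x
  have hy := congrFun h y
  have hx0 := congrFun hx 0
  have hx1 := congrFun hx 1
  have hy0 := congrFun hy 0
  have hy1 := congrFun hy 1
  simp [parTwo, resTwo] at hx0 hx1 hy0 hy1
  have hD : (((x : Fin 2 → ℤ) 0 : ℤ) : ℝ) * (((y : Fin 2 → ℤ) 1 : ℤ) : ℝ) -
      (((x : Fin 2 → ℤ) 1 : ℤ) : ℝ) * (((y : Fin 2 → ℤ) 0 : ℤ) : ℝ) ≠ 0 := by exact_mod_cast hxy
  generalize (((x : Fin 2 → ℤ) 0 : ℤ) : ℝ) = a at *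
  generalize (((x : Fin 2 → ℤ) 1 : ℤ) : ℝ) = b at *
  generalize (((y : Fin 2 → ℤ) 0 : ℤ) : ℝ) = c at *
  generalize (((y : Fin 2 → ℤ) 1 : ℤ) : ℝ) = d at *
  funext i
  apply sub_eq_zero.1
  apply (mul_eq_zero.1 (?_ : (a * d - b * c) * (q i - q' i) = 0)).resolve_left hD
  fin_cases i <;> simp only [Fin.zero_eta, Fin.mk_one, Fin.reduceFinMk]
  · linear_combination d * hx0 - b * hy0
  · linear_combination d * hx1 - b * hy1
  · linear_combination a * hy0 - c * hx0
  · linear_combination a * hy1 - c * hx1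

lemma two_case_two (L : AddSubgroup (Fin 2 → ℤ)) (x y : L)
    (hxy : (x : Fin 2 → ℤ) 0 * (y : Fin 2 → ℤ) 1 - (x : Fin 2 → ℤ) 1 * (y : Fin 2 → ℤ) 0 ≠ 0) :
    HasParamDim (XTwo L) 4 ∧ ¬ HasParamDim (XTwo L) 3 := by
  have hU : IsOpen {q : Fin 4 → ℝ | q 0 * q 3 - q 1 * q 2 ≠ 0} := by
    have : Continuous (fun q : Fin 4 → ℝ => q 0 * q 3 - q 1 * q 2) := by fun_prop
    exact isOpen_ne.preimage this
  have hmem : ∀ q ∈ {q : Fin 4 → ℝ | q 0 * q 3 - q 1 * q 2 ≠ 0}, parTwo L q ∈ XTwo L := by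
    intro q hq
    refine ⟨_, _, ?_, rfl⟩
    rw [linind_iff]
    simpa using hq
  constructor
  · refine ⟨1, fun _ => {q | q 0 * q 3 - q 1 * q 2 ≠ 0}, fun _ => parTwo L, fun _ => hU,
      fun _ => (parTwo_cont L).continuousOn, fun _ => (parTwo_inj L x y hxy).injOn, ?_⟩
    ext f
    simp only [Set.mem_iUnion, Set.mem_image]
    constructor
    · rintro ⟨v, w, hvw, rfl⟩
      rw [linind_iff] at hvw
      refine ⟨0, ![v 0, v 1, w 0, w 1], by simpa using hvw, ?_⟩
      unfold parTwo
      congr 1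
      · funext i; fin_cases i <;> rfl
      · funext i; fin_cases i <;> rfl
    · rintro ⟨_, q, hq, rfl⟩
      exact hmem q hq
  · intro h
    exact no_inj_box h _ hU ⟨![1, 0, 0, 1], by simp⟩ (parTwo L) (parTwo_cont L)
      (parTwo_inj L x y hxy).injOn hmem

/-- Coefficient of a lattice vector along `g`. -/
noncomputable def coefAlong (g m : Fin 2 → ℤ) : ℝ :=
  ((m 0 : ℝ) * g 0 + m 1 * g 1) / ((g 0 : ℝ) ^ 2 + (g 1 : ℝ) ^ 2)

lemma two_case_one (L : AddSubgroup (Fin 2 → ℤ)) (hL : L ≠ ⊥) (h : ∀ x y : L,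
    (x : Fin 2 → ℤ) 0 * (y : Fin 2 → ℤ) 1 - (x : Fin 2 → ℤ) 1 * (y : Fin 2 → ℤ) 0 = 0) :
    HasParamDim (XTwo L) 2 ∧ ¬ HasParamDim (XTwo L) 1 := by
  obtain ⟨g, hg⟩ := exists_ne_zero_mem L hL
  set par : V2 → (L → V2) := fun u m => coefAlong g m • u with hpar
  have hD : (((g : Fin 2 → ℤ) 0 : ℤ) : ℝ) ^ 2 + (((g : Fin 2 → ℤ) 1 : ℤ) : ℝ) ^ 2 ≠ 0 := by
    have : 0 < ((g : Fin 2 → ℤ) 0) ^ 2 + ((g : Fin 2 → ℤ) 1) ^ 2 := by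
      rcases hg with h | h
      · positivity
      · positivity
    exact_mod_cast this.ne'
  have hcont : Continuous par := by
    refine continuous_pi fun m => ?_
    simp only [hpar]
    fun_prop
  have hgg : coefAlong g g = 1 := by
    unfold coefAlong
    rw [div_eq_one_iff_eq hD]; ring
  have hinj : Function.Injective par := by
    intro u u' huu
    have := congrFun huu g
    simpa [hpar, hgg] using this
  have hres : ∀ v w : V2, resTwo v w L =
      par ((((g : Fin 2 → ℤ) 0 : ℤ) : ℝ) • v + (((g : Fin 2 → ℤ) 1 : ℤ) : ℝ) • w) := by
    intro v w
    funext m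
    have hm : (((m : Fin 2 → ℤ) 0 : ℤ) : ℝ) * (((g : Fin 2 → ℤ) 1 : ℤ) : ℝ) -
      (((m : Fin 2 → ℤ) 1 : ℤ) : ℝ) * (((g : Fin 2 → ℤ) 0 : ℤ) : ℝ) = 0 := by exact_mod_cast h m g
    have c0 : coefAlong g m * (((g : Fin 2 → ℤ) 0 : ℤ) : ℝ) = (((m : Fin 2 → ℤ) 0 : ℤ) : ℝ) := by
      unfold coefAlong
      rw [div_mul_eq_mul_div, div_eq_iff hD]
      linear_combination (-(((g : Fin 2 → ℤ) 1 : ℤ) : ℝ)) * hm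
    have c1 : coefAlong g m * (((g : Fin 2 → ℤ) 1 : ℤ) : ℝ) = (((m : Fin 2 → ℤ) 1 : ℤ) : ℝ) := by
      unfold coefAlong
      rw [div_mul_eq_mul_div, div_eq_iff hD]
      linear_combination ((((g : Fin 2 → ℤ) 0 : ℤ) : ℝ)) * hm
    simp only [hpar, resTwo, smul_add, smul_smul, c0, c1]
  have hmem : ∀ u : V2, u ≠ 0 → par u ∈ XTwo L := by
    intro u hu
    set a := (((g : Fin 2 → ℤ) 0 : ℤ) : ℝ)
    set b := (((g : Fin 2 → ℤ) 1 : ℤ) : ℝ)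
    refine ⟨(a ^ 2 + b ^ 2)⁻¹ • (a • u - b • perp u), (a ^ 2 + b ^ 2)⁻¹ • (b • u + a • perp u),
      ?_, ?_⟩
    · rw [linind_iff]
      have hu2 : u 0 ^ 2 + u 1 ^ 2 ≠ 0 := by
        intro h0
        apply hu
        funext i
        fin_cases i
        · simp; nlinarith [sq_nonneg (u 0), sq_nonneg (u 1)]
        · simp; nlinarith [sq_nonneg (u 0), sq_nonneg (u 1)]
      have : ((a ^ 2 + b ^ 2)⁻¹ • (a • u - b • perp u)) 0 *
          ((a ^ 2 + b ^ 2)⁻¹ • (b • u + a • perp u)) 1 -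
          ((a ^ 2 + b ^ 2)⁻¹ • (a • u - b • perp u)) 1 *
          ((a ^ 2 + b ^ 2)⁻¹ • (b • u + a • perp u)) 0 =
          (a ^ 2 + b ^ 2)⁻¹ * (u 0 ^ 2 + u 1 ^ 2) := by
        simp only [perp, Pi.smul_apply, Pi.sub_apply, Pi.add_apply, smul_eq_mul,
          Matrix.cons_val_zero, Matrix.cons_val_one]
        field_simp
        ring
      rw [this]
      exact mul_ne_zero (inv_ne_zero hD) hu2
    · rw [hres]
      congr 1
      funext i
      simp
      field_simp
      ring
  constructor
  · refine ⟨1, fun _ => {u | u ≠ 0}, fun _ => par, fun _ => isOpen_ne_zero,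
      fun _ => hcont.continuousOn, fun _ => hinj.injOn, ?_⟩
    ext f
    simp only [Set.mem_iUnion, Set.mem_image]
    constructor
    · rintro ⟨v, w, hvw, rfl⟩
      refine ⟨0, _, ?_, (hres v w).symm⟩
      intro h0
      rw [LinearIndependent.pair_iff] at hvw
      obtain ⟨h1, h2⟩ := hvw _ _ h0
      rcases hg with h | h
      · exact h (by exact_mod_cast h1)
      · exact h (by exact_mod_cast h2)
    · rintro ⟨_, u, hu, rfl⟩
      exact hmem u hu
  · intro hP
    refine no_inj_box hP {v : V2 | v ≠ 0} isOpen_ne_zero ⟨fun _ => 1, ?_⟩ par hcont hinj.injOn hmem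
    intro h
    have := congrFun h 0
    simp at this

/-- **Lemma (trrep).**  Let `Γ' ≤ Λ(Γ_k)` be a nontrivial subgroup of translations of
`Γ_k`, `k ∈ {2,3,4,6}`.  For `k = 3,4,6` the space of restrictions to `Γ'` of discrete
faithful representations of `Γ_k` has dimension `2`; for `k = 2` it has dimension `2r`
where `r` is the rank of the free abelian group `Γ'`.  In particular the dimension is
always even. -/
theorem restricted_representation_space_dimension
    (k : ℕ) (hk : k ∈ ({2, 3, 4, 6} : Set ℕ))
    (L : AddSubgroup (Fin 2 → ℤ)) (hL : L ≠ ⊥) :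
    (k ≠ 2 → HasParamDim (XHigher k L) 2 ∧ ¬ HasParamDim (XHigher k L) 1) ∧
    (k = 2 → HasParamDim (XTwo L) (2 * Module.finrank ℤ ↥L) ∧
      ¬ HasParamDim (XTwo L) (2 * Module.finrank ℤ ↥L - 1)) ∧
    (∃ d : ℕ, Even d ∧ HasParamDim (if k = 2 then XTwo L else XHigher k L) d) := by
  have hH : k ≠ 2 → HasParamDim (XHigher k L) 2 ∧ ¬ HasParamDim (XHigher k L) 1 := by
    intro h2
    apply higher_case k _ L hL
    simp only [Set.mem_insert_iff, Set.mem_singleton_iff] at hk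
    omega
  have hT : HasParamDim (XTwo L) (2 * Module.finrank ℤ ↥L) ∧
      ¬ HasParamDim (XTwo L) (2 * Module.finrank ℤ ↥L - 1) := by
    by_cases h : ∀ x y : L,
      (x : Fin 2 → ℤ) 0 * (y : Fin 2 → ℤ) 1 - (x : Fin 2 → ℤ) 1 * (y : Fin 2 → ℤ) 0 = 0
    · rw [rank_one L hL h]
      exact two_case_one L hL h
    · push Not at h
      obtain ⟨x, y, hxy⟩ := h
      rw [rank_two L x y hxy]
      exact two_case_two L x y hxy
  refine ⟨hH, fun _ => hT, ?_⟩
  by_cases h2 : k = 2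
  · exact ⟨_, even_two_mul _, by rw [if_pos h2]; exact hT.1⟩
  · exact ⟨2, even_two, by rw [if_neg h2]; exact (hH h2).1⟩
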